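/- arXiv:2202.01278 — 2 statements merged into one kernel-verified Lean document; each statement's English description precedes it below -/
import Mathlib

section
/- Let m ∈ ℕ, let α > 0, and let n ≥ m. Then for every x > 0, x^α · L^{I,(α)}_{m,n}(x) = (α+n) · ∫_0^x t^{α−1} · L_m^{(α−1)}(−t) · L_{n−m}^{(α−1)}(t) dt. -/
open Finset MeasureTheory

/-- Generalized binomial coefficient `C(t, j) = t(t-1)⋯(t-j+1)/j!`. -/
noncomputable def genBinom (t : ℝ) (j : ℕ) : ℝ :=
  (∏ i ∈ Finset.range j, (t - i)) / (Nat.factorial j)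

/-- Generalized Laguerre polynomial `L_n^{(α)}(x)`, with the convention
`L_n^{(α)} = 0` for negative integer index `n`. -/
noncomputable def laguerre (α : ℝ) (n : ℤ) (x : ℝ) : ℝ :=
  if 0 ≤ n then
    ∑ k ∈ Finset.range (n.toNat + 1),
      ((-1 : ℝ) ^ k / (Nat.factorial k)) * genBinom ((n : ℝ) + α) (n.toNat - k) * x ^ k
  else 0

/-- Type-I exceptional `X_m`-Laguerre polynomial. -/
noncomputable def XLagI (m : ℕ) (α : ℝ) (n : ℕ) (x : ℝ) : ℝ :=
  laguerre α (m : ℤ) (-x) * laguerre (α - 1) ((n : ℤ) - m) x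
    + laguerre (α - 1) (m : ℤ) (-x) * laguerre α ((n : ℤ) - m - 1) x

/-!
The proof rests on two classical derivatives, `d/dx L_n^{(a)}(x) = -L_{n-1}^{(a+1)}(x)` and
`d/dx (x^a L_n^{(a)}(cx)) = (n+a) x^{a-1} L_n^{(a-1)}(cx)`. Put `q = n - m` and differentiate the
two products `x^α L_m^{(α)}(-x) · L_q^{(α-1)}(x)` and `x^α L_{q-1}^{(α)}(x) · L_m^{(α-1)}(-x)` whose
sum is `x^α L^{I,(α)}_{m,n}(x)`. The relation `L_m^{(α)} = L_m^{(α-1)} + L_{m-1}^{(α)}` collapses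
the mixed terms to `-x^α L_{q-1}^{(α)}(x) L_m^{(α-1)}(-x)`, and the recurrence
`q L_q^{(a)}(x) = (q+a) L_{q-1}^{(a)}(x) - x L_{q-1}^{(a+1)}(x)` at `a = α - 1` identifies the total
as `α + n` times the integrand. Since `x^α` vanishes at `0`, integration gives the formula.
-/

lemma genBinom_eq_choose (t : ℝ) (j : ℕ) : genBinom t j = Ring.choose t j := by
  rw [genBinom, Ring.choose_eq_smul, ← Polynomial.aeval_eq_smeval, Polynomial.aeval_def,
    Polynomial.eval₂_eq_eval_map, descPochhammer_map, descPochhammer_eval_eq_prod_range,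
    smul_eq_mul, div_eq_inv_mul]

lemma genBinom_zero_right (t : ℝ) : genBinom t 0 = 1 := by
  rw [genBinom_eq_choose, Ring.choose_zero_right]

lemma genBinom_succ_succ (t : ℝ) (j : ℕ) :
    genBinom (t + 1) (j + 1) = genBinom t j + genBinom t (j + 1) := by
  simp only [genBinom_eq_choose, Ring.choose_succ_succ]

lemma sub_mul_genBinom (t : ℝ) (j : ℕ) :
    (t - j) * genBinom t j = t * genBinom (t - 1) j := by
  have split_last := Ring.choose_smul_choose t j.le_succ
  have split_first := Ring.choose_smul_choose t (Nat.le_add_left 1 j)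
  simp only [Nat.succ_eq_add_one, Nat.choose_succ_self_right, Nat.choose_one_right,
    Nat.add_sub_cancel, Nat.add_sub_cancel_left, Nat.cast_one, Ring.choose_one_right]
    at split_last split_first
  rw [genBinom_eq_choose, genBinom_eq_choose, mul_comm, ← split_last, split_first]

/-- The coefficient of `x ^ k` in the Laguerre polynomial `L_n^{(a)}(x)`. It is meaningful only for
`k ≤ n`: beyond that range the truncated subtraction `n - k` makes it nonzero. -/
noncomputable def laguerreCoeff (a : ℝ) (n k : ℕ) : ℝ :=
  (-1) ^ k / Nat.factorial k * genBinom (n + a) (n - k)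

lemma laguerreCoeff_self (a : ℝ) (n : ℕ) :
    laguerreCoeff a n n = (-1) ^ n / Nat.factorial n := by
  rw [laguerreCoeff, Nat.sub_self, genBinom_zero_right, mul_one]

lemma laguerreCoeff_succ_succ_mul (a : ℝ) (n k : ℕ) :
    laguerreCoeff a (n + 1) (k + 1) * (k + 1) = -laguerreCoeff (a + 1) n k := by
  have shift : ((n + 1 : ℕ) : ℝ) + a = n + (a + 1) := by push_cast; ring
  rw [laguerreCoeff, laguerreCoeff, shift, Nat.add_sub_add_right, Nat.factorial_succ]
  push_cast
  field

lemma add_mul_laguerreCoeff (a : ℝ) {n k : ℕ} (hk : k ≤ n) :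
    (a + k) * laguerreCoeff a n k = (n + a) * laguerreCoeff (a - 1) n k := by
  have absorb := sub_mul_genBinom (n + a) (n - k)
  rw [Nat.cast_sub hk] at absorb
  rw [laguerreCoeff, laguerreCoeff, ← add_sub_assoc]
  linear_combination (-1) ^ k / (Nat.factorial k : ℝ) * absorb

lemma laguerreCoeff_succ_left (a : ℝ) {n k : ℕ} (hk : k ≤ n) :
    laguerreCoeff a (n + 1) k = laguerreCoeff (a - 1) (n + 1) k + laguerreCoeff a n k := by
  have shift : ((n + 1 : ℕ) : ℝ) + a = (n + a) + 1 := by push_cast; ring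
  have shift_sub_one : ((n + 1 : ℕ) : ℝ) + (a - 1) = n + a := by push_cast; ring
  simp only [laguerreCoeff]
  rw [shift, shift_sub_one, Nat.succ_sub hk, Nat.succ_eq_add_one, genBinom_succ_succ]
  ring

lemma laguerre_natCast (a : ℝ) (n : ℕ) (x : ℝ) :
    laguerre a n x = ∑ k ∈ range (n + 1), laguerreCoeff a n k * x ^ k := by
  simp [laguerre, laguerreCoeff]

lemma laguerre_of_neg (a : ℝ) {n : ℤ} (hn : n < 0) (x : ℝ) : laguerre a n x = 0 :=
  if_neg hn.not_ge

lemma sum_laguerreCoeff_mul_pow_pred (a : ℝ) (n : ℕ) (x : ℝ) :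
    ∑ k ∈ range (n + 1), laguerreCoeff a n k * (k * x ^ (k - 1)) =
      -laguerre (a + 1) (n - 1) x := by
  cases n with
  | zero => simp [laguerre_of_neg]
  | succ n =>
    rw [sum_range_succ', Nat.cast_succ, add_sub_cancel_right, laguerre_natCast,
      ← sum_neg_distrib]
    simp only [Nat.cast_zero, zero_mul, mul_zero, add_zero, Nat.add_sub_cancel]
    refine sum_congr rfl fun k _ ↦ ?_
    rw [← neg_mul, ← laguerreCoeff_succ_succ_mul, Nat.cast_succ, mul_assoc]

lemma hasDerivAt_laguerre (a : ℝ) (n : ℤ) (x : ℝ) :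
    HasDerivAt (laguerre a n) (-laguerre (a + 1) (n - 1) x) x := by
  rcases lt_or_ge n 0 with hn | hn
  · rw [laguerre_of_neg _ (by lia), neg_zero, funext (laguerre_of_neg a hn)]
    exact hasDerivAt_const x 0
  · lift n to ℕ using hn
    rw [← sum_laguerreCoeff_mul_pow_pred, funext (laguerre_natCast a n)]
    exact HasDerivAt.fun_sum fun k _ ↦ (hasDerivAt_pow k x).const_mul _

@[fun_prop]
lemma continuous_laguerre (a : ℝ) (n : ℤ) : Continuous (laguerre a n) :=
  continuous_iff_continuousAt.2 fun x ↦ (hasDerivAt_laguerre a n x).continuousAt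

lemma laguerre_eq_laguerre_sub_one_add (a : ℝ) (n : ℤ) (x : ℝ) :
    laguerre a n x = laguerre (a - 1) n x + laguerre a (n - 1) x := by
  rcases lt_or_ge n 0 with hn | hn
  · simp only [laguerre_of_neg _ hn, laguerre_of_neg _ (show n - 1 < 0 by lia), add_zero]
  lift n to ℕ using hn
  cases n with
  | zero =>
    rw [laguerre_of_neg (n := _ - 1) _ (by simp), laguerre_natCast, laguerre_natCast]
    simp [laguerreCoeff_self]
  | succ n =>
    rw [Nat.cast_succ, add_sub_cancel_right, ← Nat.cast_succ]
    simp only [laguerre_natCast]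
    rw [sum_range_succ, sum_range_succ _ (n + 1), laguerreCoeff_self, laguerreCoeff_self,
      add_right_comm, ← sum_add_distrib]
    congr 1
    refine sum_congr rfl fun k hk ↦ ?_
    rw [laguerreCoeff_succ_left a (mem_range_succ_iff.1 hk), add_mul]

lemma add_mul_laguerre_sub_one (a : ℝ) (n : ℤ) (x : ℝ) :
    (n + a) * laguerre (a - 1) n x = a * laguerre a n x - x * laguerre (a + 1) (n - 1) x := by
  rcases lt_or_ge n 0 with hn | hn
  · simp only [laguerre_of_neg _ hn, laguerre_of_neg _ (show n - 1 < 0 by lia), mul_zero, sub_zero]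
  lift n to ℕ using hn
  rw [sub_eq_add_neg (a * _), ← mul_neg, ← sum_laguerreCoeff_mul_pow_pred, laguerre_natCast,
    laguerre_natCast, mul_sum, mul_sum, mul_sum, ← sum_add_distrib]
  refine sum_congr rfl fun k hk ↦ ?_
  have absorb := add_mul_laguerreCoeff a (mem_range_succ_iff.1 hk)
  have mul_pow_pred : x * (k * x ^ (k - 1)) = k * x ^ k := by
    cases k with
    | zero => simp
    | succ k => rw [Nat.add_sub_cancel, pow_succ]; ring
  push_cast
  linear_combination -x ^ k * absorb - laguerreCoeff a n k * mul_pow_pred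

lemma mul_laguerre (a : ℝ) (n : ℤ) (x : ℝ) :
    n * laguerre a n x = (n + a) * laguerre a (n - 1) x - x * laguerre (a + 1) (n - 1) x := by
  linear_combination (n + a) * laguerre_eq_laguerre_sub_one_add a n x +
    add_mul_laguerre_sub_one a n x

lemma hasDerivAt_rpow_mul_laguerre (a c : ℝ) (n : ℤ) {x : ℝ} (hx : x ≠ 0) :
    HasDerivAt (fun y ↦ y ^ a * laguerre a n (c * y))
      ((n + a) * x ^ (a - 1) * laguerre (a - 1) n (c * x)) x := by
  have hL : HasDerivAt (fun y ↦ laguerre a n (c * y)) _ x :=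
    (hasDerivAt_laguerre a n (c * x)).comp x ((hasDerivAt_id x).const_mul c)
  refine ((Real.hasDerivAt_rpow_const (Or.inl hx)).mul hL).congr_deriv ?_
  have hpow : x ^ a = x ^ (a - 1) * x := by rw [← Real.rpow_add_one hx, sub_add_cancel]
  rw [hpow]
  linear_combination -x ^ (a - 1) * add_mul_laguerre_sub_one a n (c * x)

lemma continuous_XLagI (m : ℕ) (α : ℝ) (n : ℕ) : Continuous (XLagI m α n) := by
  unfold XLagI
  fun_prop

lemma hasDerivAt_rpow_mul_XLagI (m : ℕ) (α : ℝ) (n : ℕ) {x : ℝ} (hx : x ≠ 0) :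
    HasDerivAt (fun y ↦ y ^ α * XLagI m α n y)
      ((α + n) * (x ^ (α - 1) * laguerre (α - 1) m (-x) * laguerre (α - 1) (n - m) x)) x := by
  have hA := hasDerivAt_rpow_mul_laguerre α (-1) m hx
  have hB := hasDerivAt_rpow_mul_laguerre α 1 (n - m - 1) hx
  have ha := (hasDerivAt_laguerre (α - 1) m (-x)).comp x (hasDerivAt_neg x)
  have hb := hasDerivAt_laguerre (α - 1) (n - m) x
  simp only [neg_one_mul, one_mul] at hA hB
  rw [sub_add_cancel] at ha hb
  have hsplit : (fun y ↦ y ^ α * XLagI m α n y) = fun y ↦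
      y ^ α * laguerre α m (-y) * laguerre (α - 1) (n - m) y +
        y ^ α * laguerre α (n - m - 1) y * laguerre (α - 1) m (-y) := by
    funext y
    rw [XLagI]
    ring
  rw [hsplit]
  refine ((hA.mul hb).add (hB.mul ha)).congr_deriv ?_
  have hcancel := laguerre_eq_laguerre_sub_one_add α m (-x)
  have hrec := mul_laguerre (α - 1) (n - m) x
  have hpow : x ^ α = x ^ (α - 1) * x := by rw [← Real.rpow_add_one hx, sub_add_cancel]
  rw [sub_add_cancel] at hrec
  push_cast at hrec ⊢
  simp only [Function.comp_apply, hpow]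
  linear_combination -x ^ (α - 1) * laguerre (α - 1) m (-x) * hrec -
    x ^ (α - 1) * x * laguerre α (n - m - 1) x * hcancel

lemma intervalIntegrable_rpow_mul_laguerre_mul_laguerre {r : ℝ} (hr : -1 < r) (a b : ℝ) (m n : ℤ)
    (u v : ℝ) :
    IntervalIntegrable (fun t ↦ t ^ r * laguerre a m (-t) * laguerre b n t) volume u v := by
  have hcont : Continuous fun t ↦ laguerre a m (-t) * laguerre b n t := by fun_prop
  simpa only [mul_assoc] using
    (intervalIntegral.intervalIntegrable_rpow' hr).mul_continuousOn hcont.continuousOn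

theorem stmt0 (m : ℕ) (α : ℝ) (hα : 0 < α) (n : ℕ) (hmn : m ≤ n) :
    ∀ x : ℝ, 0 < x →
      x ^ α * XLagI m α n x =
        (α + n) * ∫ t in (0 : ℝ)..x,
          t ^ (α - 1) * laguerre (α - 1) (m : ℤ) (-t) * laguerre (α - 1) ((n : ℤ) - m) t := by
  intro x hx
  have hcont : Continuous fun y ↦ y ^ α * XLagI m α n y :=
    (Real.continuous_rpow_const hα.le).mul (continuous_XLagI m α n)
  have hint := intervalIntegrable_rpow_mul_laguerre_mul_laguerre
    (show -1 < α - 1 by linarith) (α - 1) (α - 1) m (n - m) 0 x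
  have hFTC := intervalIntegral.integral_eq_sub_of_hasDerivAt_of_le hx.le hcont.continuousOn
    (fun y hy ↦ hasDerivAt_rpow_mul_XLagI m α n hy.1.ne') (hint.const_mul (α + n))
  rw [← intervalIntegral.integral_const_mul, hFTC, Real.zero_rpow hα.ne', zero_mul, sub_zero]
end

section
/- Let m ∈ ℕ and let α, β ∈ ℝ satisfy β > 0, α+1−m > 0, and α+1−m−β ∉ {0,1,…,m−1}, and let n ≥ m. Then for every x ∈ [−1,1], (α+n−m+1)·(x+1)^β·P^{(α,β)}_{m,n}(x) = (−1)^m·(β+n)·(α+n−2m+1)·∫_{−1}^x (t+1)^{β−1}·P_m^{(−α−1,β−1)}(t)·P_{n−m}^{(α+1,β−1)}(t) dt. -/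
open Finset MeasureTheory

/-- Jacobi polynomial `P_n^{(α,β)}(x)` for arbitrary real parameters, with the
convention `P_n^{(α,β)} = 0` for negative integer index `n`. -/
noncomputable def jacobi (α β : ℝ) (n : ℤ) (x : ℝ) : ℝ :=
  if 0 ≤ n then
    (Nat.factorial n.toNat : ℝ)⁻¹ *
      ∑ k ∈ Finset.range (n.toNat + 1),
        (n.toNat.choose k : ℝ) *
          (∏ i ∈ Finset.Ico k n.toNat, (α + i + 1)) *
          (∏ i ∈ Finset.range k, (α + β + (n : ℝ) + 1 + i)) *
          ((x - 1) / 2) ^ k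
  else 0

/-- Exceptional `X_m`-Jacobi polynomial. -/
noncomputable def XJac (m : ℕ) (α β : ℝ) (n : ℕ) (x : ℝ) : ℝ :=
  ((-1 : ℝ) ^ m / (α + 1 + n - m)) *
    ((x - 1) * (1 + α + β + n - m) / 2 *
        jacobi (-α - 1) (β - 1) (m : ℤ) x * jacobi (α + 2) β ((n : ℤ) - m - 1) x
      + (α + 1 - m) * jacobi (-α - 2) β (m : ℤ) x * jacobi (α + 1) (β - 1) ((n : ℤ) - m) x)

/-!
Put `a = α + 1`, `b = β - 1`, `u = (x - 1) / 2`, and let `A = P_m^{(-a,b)}` and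
`B = P_{n-m}^{(a,b)}`. Then `A` and `u ^ a B` are eigenfunctions of the same Jacobi operator, so by
Lagrange's identity `(x + 1) ^ b A B` is, up to the difference of the two eigenvalues, the
derivative of `(x + 1) ^ (b + 1) K`, where `K` is `u ^ (1 - a)` times the Wronskian of `A` and
`u ^ a B`. The formula for `B'` and a contiguous relation for `A` identify the polynomial `K` with
the exceptional Jacobi polynomial up to normalization, and the boundary term at `x = -1` vanishes
because `β > 0`.
-/

section JacobiPolynomial

open Polynomial

lemma coeff_X_mul_derivative {R : Type*} [Semiring R] (p : R[X]) (k : ℕ) :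
    (X * derivative p).coeff k = k * p.coeff k := by
  cases k with
  | zero => simp
  | succ k => rw [coeff_X_mul, coeff_derivative, ← Nat.cast_succ, Nat.cast_comm]

section CommRing

variable {R : Type*} [CommRing R]

/-- The Jacobi differential operator `y ↦ u (1 + u) y'' + (a + 1 + (a + b + 2) u) y'`. It is the
usual one written in the variable `u = (x - 1) / 2`. -/
noncomputable def jacobiOperator (a b : R) (y : R[X]) : R[X] :=
  X * (1 + X) * derivative (derivative y) + (C (a + 1) + C (a + b + 2) * X) * derivative y

lemma coeff_jacobiOperator (a b : R) (y : R[X]) (k : ℕ) :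
    (jacobiOperator a b y).coeff k =
      (k + 1) * (k + a + 1) * y.coeff (k + 1) + k * (k + a + b + 1) * y.coeff k := by
  have expand : jacobiOperator a b y =
      X * derivative (derivative y + X * derivative y) + C a * derivative y + derivative y
        + C (a + b) * (X * derivative y) + X * derivative y := by
    simp only [jacobiOperator, derivative_add, derivative_mul, derivative_X, C_add, C_1,
      C_ofNat]
    ring
  simp only [expand, coeff_add, coeff_C_mul, coeff_X_mul_derivative, coeff_derivative]
  ring

/-- The polynomial `u (A B' - A' B) + a A B`, which is `u ^ (1 - a)` times the Wronskian of `A` and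
`u ^ a B`. -/
noncomputable def twistedWronskian (a : R) (A B : R[X]) : R[X] :=
  X * (A * derivative B - derivative A * B) + C a * (A * B)

-- Multiplication by `u ^ a` intertwines `jacobiOperator a b + a * (b + 1)` with
-- `jacobiOperator (-a) b`, so this is Lagrange's identity for the latter operator.
lemma twistedWronskian_lagrange_identity (a b : R) (A B : R[X]) :
    C (b + 1) * twistedWronskian a A B + (1 + X) * derivative (twistedWronskian a A B) =
      A * jacobiOperator a b B - B * jacobiOperator (-a) b A + C (a * (b + 1)) * (A * B) := by
  simp only [twistedWronskian, jacobiOperator, derivative_add, derivative_sub, derivative_mul,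
    derivative_X, derivative_C, C_add, C_mul, C_neg, C_1, C_ofNat]
  ring

lemma twistedWronskian_lagrange_identity_of_eigen {a b μ ν : R} {A B : R[X]}
    (hA : jacobiOperator (-a) b A = C μ * A) (hB : jacobiOperator a b B = C ν * B) :
    C (b + 1) * twistedWronskian a A B + (1 + X) * derivative (twistedWronskian a A B) =
      C (a * (b + 1) + ν - μ) * (A * B) := by
  rw [twistedWronskian_lagrange_identity, hA, hB, C_sub, C_add]
  ring

end CommRing

section Field

variable {K : Type*} [Field K]

/-- The coefficient of `u ^ k`, where `u = (x - 1) / 2`, in the Jacobi polynomial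
`P_n^{(a,b)}(x)`. -/
noncomputable def jacobiCoeff (a b : K) (n k : ℕ) : K :=
  (n.factorial : K)⁻¹ * (n.choose k * (∏ i ∈ Ico k n, (a + i + 1)) *
    ∏ i ∈ range k, (a + b + n + 1 + i))

lemma jacobiCoeff_of_lt (a b : K) {n k : ℕ} (h : n < k) : jacobiCoeff a b n k = 0 := by
  simp [jacobiCoeff, Nat.choose_eq_zero_of_lt h]

lemma jacobiCoeff_succ_right (a b : K) (n k : ℕ) :
    (k + 1) * (k + a + 1) * jacobiCoeff a b n (k + 1) =
      (n - k) * (n + k + a + b + 1) * jacobiCoeff a b n k := by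
  rcases lt_trichotomy n k with h | rfl | h
  · simp [jacobiCoeff_of_lt, h, h.trans (Nat.lt_succ_self k)]
  · simp [jacobiCoeff_of_lt]
  · have choose_succ : (n.choose (k + 1) : K) * (k + 1) = n.choose k * (n - k) := by
      rw [← Nat.cast_sub h.le]
      norm_cast
      rw [Nat.choose_succ_right_eq]
    rw [jacobiCoeff, jacobiCoeff, prod_range_succ, prod_eq_prod_Ico_succ_bot h]
    linear_combination (k + a + 1) * (n.factorial : K)⁻¹ * (∏ i ∈ Ico (k + 1) n, (a + i + 1)) *
      (∏ i ∈ range k, (a + b + n + 1 + i)) * (a + b + n + 1 + k) * choose_succ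

lemma jacobiCoeff_succ_succ [CharZero K] (a b : K) (n k : ℕ) :
    (k + 1) * jacobiCoeff a b (n + 1) (k + 1) =
      (a + b + n + 2) * jacobiCoeff (a + 1) (b + 1) n k := by
  have choose_succ : ((n + 1).choose (k + 1) : K) * (k + 1) = (n + 1) * n.choose k := by
    exact_mod_cast (Nat.add_one_mul_choose_eq n k).symm
  have prod_Ico : ∏ i ∈ Ico (k + 1) (n + 1), (a + (i : K) + 1) =
      ∏ i ∈ Ico k n, (a + 1 + (i : K) + 1) := by
    rw [← prod_Ico_add' (fun i : ℕ ↦ a + (i : K) + 1)]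
    exact prod_congr rfl fun i _ ↦ by push_cast; ring
  have prod_range : ∏ i ∈ range (k + 1), (a + b + (n + 1 : ℕ) + 1 + (i : K)) =
      (∏ i ∈ range k, (a + 1 + (b + 1) + n + 1 + (i : K))) * (a + b + n + 2) := by
    rw [prod_range_succ']
    congr 1
    · exact prod_congr rfl fun i _ ↦ by push_cast; ring
    · push_cast; ring
  have factorial_succ : (n.factorial : K)⁻¹ = ((n + 1).factorial : K)⁻¹ * (n + 1) := by
    rw [Nat.factorial_succ]
    push_cast
    field_simp
  rw [jacobiCoeff, jacobiCoeff, prod_Ico, prod_range, factorial_succ]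
  linear_combination ((n + 1).factorial : K)⁻¹ * (∏ i ∈ Ico k n, (a + 1 + (i : K) + 1)) *
    ((a + b + n + 2) * ∏ i ∈ range k, (a + 1 + (b + 1) + n + 1 + (i : K))) * choose_succ

lemma jacobiCoeff_contiguous (a b : K) (n k : ℕ) :
    (a + k) * jacobiCoeff a b n k = (a + n) * jacobiCoeff (a - 1) (b + 1) n k := by
  rcases lt_or_ge n k with h | h
  · simp [jacobiCoeff_of_lt, h]
  have prod_shift : (a + k) * ∏ i ∈ Ico k n, (a + i + 1) =
      (a + n) * ∏ i ∈ Ico k n, (a - 1 + i + 1) := by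
    induction n, h using Nat.le_induction with
    | base => simp
    | succ n hn ih =>
      rw [prod_Ico_succ_top hn, prod_Ico_succ_top hn]
      push_cast
      linear_combination (a + n + 1) * ih
  have add_params : a - 1 + (b + 1) = a + b := by ring
  rw [jacobiCoeff, jacobiCoeff, add_params]
  linear_combination (n.factorial : K)⁻¹ * n.choose k *
    (∏ i ∈ range k, (a + b + n + 1 + i)) * prod_shift

/-- The Jacobi polynomial `P_n^{(a,b)}(x)`, as a polynomial in the variable `u = (x - 1) / 2`, in
which its coefficients are explicit. -/
noncomputable def jacobiPolynomial (a b : K) (n : ℕ) : K[X] :=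
  ∑ k ∈ range (n + 1), monomial k (jacobiCoeff a b n k)

lemma coeff_jacobiPolynomial (a b : K) (n k : ℕ) :
    (jacobiPolynomial a b n).coeff k = jacobiCoeff a b n k := by
  simp only [jacobiPolynomial, finsetSum_coeff, coeff_monomial, sum_ite_eq', mem_range,
    ite_eq_left_iff, not_lt]
  exact fun h ↦ (jacobiCoeff_of_lt a b h).symm

theorem jacobiOperator_jacobiPolynomial (a b : K) (n : ℕ) :
    jacobiOperator a b (jacobiPolynomial a b n) =
      C (n * (n + a + b + 1)) * jacobiPolynomial a b n := by
  ext k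
  rw [coeff_jacobiOperator, coeff_C_mul, coeff_jacobiPolynomial, coeff_jacobiPolynomial]
  linear_combination jacobiCoeff_succ_right a b n k

lemma derivative_jacobiPolynomial_zero (a b : K) : derivative (jacobiPolynomial a b 0) = 0 := by
  simp [jacobiPolynomial]

theorem derivative_jacobiPolynomial_succ [CharZero K] (a b : K) (n : ℕ) :
    derivative (jacobiPolynomial a b (n + 1)) =
      C (a + b + n + 2) * jacobiPolynomial (a + 1) (b + 1) n := by
  ext k
  rw [coeff_derivative, coeff_C_mul, coeff_jacobiPolynomial, coeff_jacobiPolynomial, mul_comm,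
    jacobiCoeff_succ_succ]

theorem jacobiPolynomial_contiguous (a b : K) (n : ℕ) :
    C a * jacobiPolynomial a b n + X * derivative (jacobiPolynomial a b n) =
      C (a + n) * jacobiPolynomial (a - 1) (b + 1) n := by
  ext k
  rw [coeff_add, coeff_X_mul_derivative, coeff_C_mul, coeff_C_mul, coeff_jacobiPolynomial,
    coeff_jacobiPolynomial]
  linear_combination jacobiCoeff_contiguous a b n k

end Field

lemma jacobi_natCast (a b : ℝ) (n : ℕ) (x : ℝ) :
    jacobi a b n x = (jacobiPolynomial a b n).eval ((x - 1) / 2) := by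
  simp only [jacobi, Int.natCast_nonneg, if_true, Int.toNat_natCast, Int.cast_natCast,
    jacobiPolynomial, eval_finsetSum, eval_monomial, jacobiCoeff, mul_sum]
  exact sum_congr rfl fun k _ ↦ by ring

lemma eval_derivative_jacobiPolynomial (a b : ℝ) (n : ℕ) (x : ℝ) :
    (derivative (jacobiPolynomial a b n)).eval ((x - 1) / 2) =
      (a + b + n + 1) * jacobi (a + 1) (b + 1) ((n : ℤ) - 1) x := by
  cases n with
  | zero => simp [derivative_jacobiPolynomial_zero, jacobi]
  | succ n =>
    rw [derivative_jacobiPolynomial_succ, eval_mul, eval_C, ← jacobi_natCast]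
    push_cast
    rw [add_sub_cancel_right]
    ring

lemma XJac_add_eq_twistedWronskian (m N : ℕ) (α β x : ℝ) :
    XJac m α β (m + N) x = (-1) ^ m / (α + 1 + N) *
      (twistedWronskian (α + 1) (jacobiPolynomial (-α - 1) (β - 1) m)
        (jacobiPolynomial (α + 1) (β - 1) N)).eval ((x - 1) / 2) := by
  have hB := eval_derivative_jacobiPolynomial (α + 1) (β - 1) N x
  have hA := congrArg (eval ((x - 1) / 2)) (jacobiPolynomial_contiguous (-α - 1) (β - 1) m)
  simp only [eval_add, eval_mul, eval_C, eval_X, ← jacobi_natCast] at hA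
  rw [show α + 1 + 1 = α + 2 by ring, sub_add_cancel] at hB
  rw [show -α - 1 - 1 = -α - 2 by ring, sub_add_cancel] at hA
  have natCast_add_sub : ((m + N : ℕ) : ℤ) - m = N := by simp
  have denom_eq : α + 1 + (m + N : ℕ) - m = α + 1 + N := by push_cast; ring
  rw [XJac, natCast_add_sub, denom_eq]
  simp only [twistedWronskian, eval_add, eval_sub, eval_mul, eval_C, eval_X, ← jacobi_natCast]
  rw [hB]
  push_cast
  linear_combination (-1) ^ m / (α + 1 + N) * jacobi (α + 1) (β - 1) N x * hA

end JacobiPolynomial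

section Integral

open Polynomial

lemma integral_rpow_smul_add_deriv {E : Type*} [NormedAddCommGroup E] [NormedSpace ℝ E]
    [CompleteSpace E] {a x p : ℝ} {f f' : ℝ → E} (hp : 0 < p) (hax : a ≤ x)
    (hf : ContinuousOn f (Set.Icc a x)) (hderiv : ∀ t ∈ Set.Ioo a x, HasDerivAt f (f' t) t)
    (hf' : IntervalIntegrable f' volume a x) :
    ∫ t in a..x, (t - a) ^ (p - 1) • (p • f t + (t - a) • f' t) = (x - a) ^ p • f x := by
  have rpow_deriv : ∀ t ∈ Set.Ioo a x,
      HasDerivAt (fun t ↦ (t - a) ^ p) (p * (t - a) ^ (p - 1)) t := fun t ht ↦ by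
    simpa using ((hasDerivAt_id t).sub_const a).rpow_const (Or.inl (sub_pos.2 ht.1).ne')
  have rpow_integrable : IntervalIntegrable (fun t ↦ p * (t - a) ^ (p - 1)) volume a x := by
    have h := intervalIntegral.intervalIntegrable_rpow' (a := 0) (b := x - a)
      (show -1 < p - 1 by linarith)
    simpa using (h.comp_sub_right a).const_mul p
  have product_rule := intervalIntegral.integral_deriv_smul_eq_sub_of_hasDeriv_right
    (u := fun t ↦ (t - a) ^ p) (v := f)
    ((continuous_id.sub continuous_const).rpow_const fun _ ↦ Or.inr hp.le).continuousOn
    (by rwa [Set.uIcc_of_le hax])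
    (fun t ht ↦ (rpow_deriv t (by simpa [hax] using ht)).hasDerivWithinAt)
    (fun t ht ↦ (hderiv t (by simpa [hax] using ht)).hasDerivWithinAt)
    rpow_integrable hf'
  rw [sub_self, Real.zero_rpow hp.ne', zero_smul, sub_zero] at product_rule
  rw [← product_rule]
  refine intervalIntegral.integral_congr_uIoo fun t ht ↦ ?_
  have ht' : t - a ≠ 0 := by
    rw [Set.uIoo_of_le hax] at ht
    exact (sub_pos.2 ht.1).ne'
  simp only [smul_add, smul_smul]
  rw [mul_comm p, Real.rpow_sub_one ht', div_mul_cancel₀ _ ht']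

lemma integral_rpow_mul_eigenpolynomials {a b μ ν x : ℝ} {A B : ℝ[X]} (hb : -1 < b)
    (hx : -1 ≤ x) (hA : jacobiOperator (-a) b A = C μ * A)
    (hB : jacobiOperator a b B = C ν * B) :
    (x + 1) ^ (b + 1) * (twistedWronskian a A B).eval ((x - 1) / 2) =
      (a * (b + 1) + ν - μ) *
        ∫ t in (-1)..x, (t + 1) ^ b * A.eval ((t - 1) / 2) * B.eval ((t - 1) / 2) := by
  set W := twistedWronskian a A B
  have hasDerivAt_W (t : ℝ) : HasDerivAt (fun t ↦ W.eval ((t - 1) / 2))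
      ((derivative W).eval ((t - 1) / 2) * (1 / 2)) t :=
    (W.hasDerivAt _).comp t (((hasDerivAt_id t).sub_const 1).div_const 2)
  have integral_W := integral_rpow_smul_add_deriv (p := b + 1) (by linarith) hx
    (fun t _ ↦ (hasDerivAt_W t).continuousAt.continuousWithinAt) (fun t _ ↦ hasDerivAt_W t)
    (Continuous.intervalIntegrable (by fun_prop) _ _)
  simp only [sub_neg_eq_add, smul_eq_mul, add_sub_cancel_right] at integral_W
  rw [← integral_W, ← intervalIntegral.integral_const_mul]
  refine intervalIntegral.integral_congr fun t _ ↦ ?_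
  have lagrange := congrArg (eval ((t - 1) / 2))
    (twistedWronskian_lagrange_identity_of_eigen hA hB)
  simp only [eval_add, eval_mul, eval_C, eval_X, eval_one] at lagrange
  linear_combination (t + 1) ^ b * lagrange

theorem integral_rpow_mul_jacobi_mul_jacobi (a : ℝ) {b x : ℝ} (m n : ℕ) (hb : -1 < b)
    (hx : -1 ≤ x) :
    (x + 1) ^ (b + 1) * (twistedWronskian a (jacobiPolynomial (-a) b m)
        (jacobiPolynomial a b n)).eval ((x - 1) / 2) =
      (m + n + b + 1) * (n - m + a) *
        ∫ t in (-1)..x, (t + 1) ^ b * jacobi (-a) b m t * jacobi a b n t := by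
  simp only [jacobi_natCast]
  rw [integral_rpow_mul_eigenpolynomials hb hx (jacobiOperator_jacobiPolynomial (-a) b m)
    (jacobiOperator_jacobiPolynomial a b n)]
  congr 1
  ring

end Integral

theorem stmt8_general {m n : ℕ} (hmn : m ≤ n) {α β x : ℝ} (hβ : 0 < β)
    (hα : α + 1 + n - m ≠ 0) (hx : -1 ≤ x) :
    (α + n - m + 1) * (x + 1) ^ β * XJac m α β n x =
      (-1 : ℝ) ^ m * (β + n) * (α + n - 2 * m + 1) *
        ∫ t in (-1 : ℝ)..x,
          (t + 1) ^ (β - 1) * jacobi (-α - 1) (β - 1) (m : ℤ) t *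
            jacobi (α + 1) (β - 1) ((n : ℤ) - m) t := by
  obtain ⟨N, rfl⟩ := Nat.exists_eq_add_of_le hmn
  have natCast_add_sub : ((m + N : ℕ) : ℤ) - m = N := by simp
  have denom_ne : α + 1 + N ≠ 0 := by convert hα using 1; push_cast; ring
  have key := integral_rpow_mul_jacobi_mul_jacobi (α + 1) m N (b := β - 1) (by linarith) hx
  rw [neg_add', sub_add_cancel] at key
  rw [XJac_add_eq_twistedWronskian, natCast_add_sub]
  field_simp
  push_cast
  linear_combination (α + 1 + N) * key

theorem stmt8 (m : ℕ) (α β : ℝ) (hβ : 0 < β) (hα : 0 < α + 1 - m)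
    (hexc : ∀ k : ℕ, k < m → α + 1 - m - β ≠ k) (n : ℕ) (hmn : m ≤ n) :
    ∀ x ∈ Set.Icc (-1 : ℝ) 1,
      (α + n - m + 1) * (x + 1) ^ β * XJac m α β n x =
        (-1 : ℝ) ^ m * (β + n) * (α + n - 2 * m + 1) *
          ∫ t in (-1 : ℝ)..x,
            (t + 1) ^ (β - 1) * jacobi (-α - 1) (β - 1) (m : ℤ) t *
              jacobi (α + 1) (β - 1) ((n : ℤ) - m) t := by
  intro x hx
  refine stmt8_general hmn hβ ?_ hx.1
  have : (0 : ℝ) ≤ n := n.cast_nonneg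
  linarith
end
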